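/- arXiv:1812.10457 — 3 statements merged into one kernel-verified Lean document; each statement's English description precedes it below -/
import Mathlib

section
/- Fix α ∈ [5/6, 1], ε > 0, δ ∈ (0, 1], and P ≥ 1, and set Q0 = P^{(1−α−ε)/2}, Q1 = Q2 = P^{(α−1/2−ε)/2}, A1 = 3·P^{(2α−3/2)/2}, and A2 = 3·P^{1/4}; assume Q0, Q1, Q2, A1, A2 are positive integers. For reals g0, g1, g2, let d_min(g0, g1, g2) be the minimum of |g0·(q0 − q̃0) + A1·g1·(q1 − q̃1) + A2·g2·(q2 − q̃2)| over all pairs of integer triples (q0, q1, q2) ≠ (q̃0, q̃1, q̃2) with |q0|, |q̃0| ≤ Q0, |q1|, |q̃1| ≤ Q1, and |q2|, |q̃2| ≤ Q2. Then the set H₀ := {(h11, h12, h21, h22) ∈ (1, 2]⁴ : d_min(h11·h22, h12·h21, h11·h22) < δ} has four-dimensional Lebesgue measure at most 12096·δ·P^{−ε/2}; in particular, d_min(h11·h22, h12·h21, h11·h22) ≥ δ for every (h11, h12, h21, h22) ∈ (1, 2]⁴ outside H₀. -/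
/-!
Write `k_i = q_i - q_i'` for the difference of two constellation points and `m = k0 + A2 * k2`, so
that a point `h` is in outage when `|h11 h22 m + A1 h12 h21 k1| < δ` for some `(k0, k1, k2) ≠ 0`.
Since `A1, A2 ≥ 3 Q0`, both `k1 = 0` and `m = 0` force the left side to be at least `1`, so `k1 ≠ 0`.
Both products of channel coefficients lie in `(1, 4]`, so the two terms can only cancel if `|m|` is
comparable to `A1 |k1|`.

* For fixed `m` and `k1 ≠ 0`, slicing in `h11` gives intervals of length at most
  `2 δ / |m| ≤ 12 δ / (A1 |k1|)` (`volume_slab_le`).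
* If `k2 ≠ 0`, comparability gives `|k2| ≤ 15 A1 |k1| / A2`; the factor `|k1|` in the number of
  admissible `k2` cancels the one in the slab bound, and summing over `k0` and `k1` yields
  `7200 δ Q0 Q1 / A2 = 2400 δ P ^ (-ε)`.
* If `k2 = 0`, comparability gives `|k1| ≤ 3`, and the sum is at most
  `360 δ Q0 / A1 ≤ 120 δ P ^ (-ε / 2)`; this is where `α ≥ 5 / 6` is used.
-/

open MeasureTheory

/-- Minimum distance of the constellation
`g0·q0 + A1·g1·q1 + A2·g2·q2` over pairs of distinct integer triples with
`|q0| ≤ Q0`, `|q1| ≤ Q1`, `|q2| ≤ Q2`. -/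
noncomputable def dmin3 (A1 A2 Q0 Q1 Q2 g0 g1 g2 : ℝ) : ℝ :=
  sInf {d : ℝ | ∃ q0 q1 q2 q0' q1' q2' : ℤ,
    |(q0 : ℝ)| ≤ Q0 ∧ |(q0' : ℝ)| ≤ Q0 ∧
    |(q1 : ℝ)| ≤ Q1 ∧ |(q1' : ℝ)| ≤ Q1 ∧
    |(q2 : ℝ)| ≤ Q2 ∧ |(q2' : ℝ)| ≤ Q2 ∧
    (q0, q1, q2) ≠ (q0', q1', q2') ∧
    d = |g0 * ((q0 : ℝ) - (q0' : ℝ)) + A1 * g1 * ((q1 : ℝ) - (q1' : ℝ)) +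
          A2 * g2 * ((q2 : ℝ) - (q2' : ℝ))|}

/-- The outage set `H₀` of channel coefficients `(h11, h12, h21, h22) ∈ (1,2]⁴`
for which the minimum distance `dmin3` at `g0 = g2 = h11·h22`, `g1 = h12·h21`
is below `δ`. -/
noncomputable def outage3 (A1 A2 Q0 Q1 Q2 δ : ℝ) : Set (ℝ × ℝ × ℝ × ℝ) :=
  {p | (p.1 ∈ Set.Ioc (1 : ℝ) 2 ∧ p.2.1 ∈ Set.Ioc (1 : ℝ) 2 ∧
        p.2.2.1 ∈ Set.Ioc (1 : ℝ) 2 ∧ p.2.2.2 ∈ Set.Ioc (1 : ℝ) 2) ∧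
       dmin3 A1 A2 Q0 Q1 Q2 (p.1 * p.2.2.2) (p.2.1 * p.2.2.1) (p.1 * p.2.2.2) < δ}

/-- The channel coefficients `(h11, h12, h21, h22) ∈ (1, 2]⁴` for which the difference vector with
combined coefficient `m` of `h11 * h22` and coefficient `k` of `A * h12 * h21` has length below
`δ`. -/
def slab (A δ m k : ℝ) : Set (ℝ × ℝ × ℝ × ℝ) :=
  {p | (p.1 ∈ Set.Ioc (1 : ℝ) 2 ∧ p.2.1 ∈ Set.Ioc (1 : ℝ) 2 ∧
        p.2.2.1 ∈ Set.Ioc (1 : ℝ) 2 ∧ p.2.2.2 ∈ Set.Ioc (1 : ℝ) 2) ∧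
       |(p.1 * p.2.2.2) * m + A * (p.2.1 * p.2.2.1) * k| < δ}

lemma measurableSet_slab (A δ m k : ℝ) : MeasurableSet (slab A δ m k) := by
  have h : Measurable fun p : ℝ × ℝ × ℝ × ℝ =>
      |(p.1 * p.2.2.2) * m + A * (p.2.1 * p.2.2.1) * k| := by
    apply Continuous.measurable
    fun_prop
  unfold slab
  refine MeasurableSet.inter (MeasurableSet.inter ?_ (MeasurableSet.inter ?_
    (MeasurableSet.inter ?_ ?_))) (measurableSet_lt h measurable_const)
  · exact measurableSet_Ioc.preimage measurable_fst
  · exact measurableSet_Ioc.preimage (measurable_fst.comp measurable_snd)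
  · exact measurableSet_Ioc.preimage (measurable_fst.comp (measurable_snd.comp measurable_snd))
  · exact measurableSet_Ioc.preimage (measurable_snd.comp (measurable_snd.comp measurable_snd))

lemma mul_mem_of_mem_Ioc {x y : ℝ} (hx : x ∈ Set.Ioc (1 : ℝ) 2) (hy : y ∈ Set.Ioc (1 : ℝ) 2) :
    1 ≤ x * y ∧ x * y ≤ 4 := by
  obtain ⟨h1, h2⟩ := hx
  obtain ⟨h3, h4⟩ := hy
  constructor <;> nlinarith

/-- Near-cancellation of `g * m` and `A * g' * k` makes `|m|` and `A * |k|` comparable. -/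
lemma comparable {A δ m k g g' : ℝ} (hA : 0 ≤ A) (hδ : δ ≤ 1)
    (hg : 1 ≤ g ∧ g ≤ 4) (hg' : 1 ≤ g' ∧ g' ≤ 4) (h : |g * m + A * g' * k| < δ) :
    A * |k| < 4 * |m| + 1 ∧ |m| < 4 * (A * |k|) + 1 := by
  have h1 : |g * m| = g * |m| := by rw [abs_mul, abs_of_nonneg (by linarith [hg.1])]
  have h2 : |A * g' * k| = g' * (A * |k|) := by
    rw [abs_mul, abs_mul, abs_of_nonneg hA, abs_of_nonneg (by linarith [hg'.1])]; ring
  have h3 : |A * g' * k| ≤ |g * m + A * g' * k| + |g * m| := by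
    have := abs_sub (g * m + A * g' * k) (g * m)
    simpa using this
  have h4 : |g * m| ≤ |g * m + A * g' * k| + |A * g' * k| := by
    have := abs_sub (g * m + A * g' * k) (A * g' * k)
    simpa using this
  rw [h1, h2] at h3 h4
  have hk : 0 ≤ A * |k| := by positivity
  have hm : 0 ≤ |m| := abs_nonneg m
  constructor <;> nlinarith [hg.1, hg.2, hg'.1, hg'.2]

lemma volume_slab_le {A δ m k : ℝ} (hA : 3 ≤ A) (hδ0 : 0 < δ) (hδ : δ ≤ 1) (hk : 1 ≤ |k|) :
    volume (slab A δ m k) ≤ ENNReal.ofReal (12 * δ / (A * |k|)) := by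
  have hAk : 3 ≤ A * |k| := by nlinarith
  rcases lt_or_ge |m| (A * |k| / 6) with hm | hm
  · have : slab A δ m k = ∅ := by
      ext p
      simp only [slab, Set.mem_ofPred_eq, Set.mem_empty_iff_false, iff_false]
      rintro ⟨⟨h1, h2, h3, h4⟩, h⟩
      have := (comparable (by linarith) hδ (mul_mem_of_mem_Ioc h1 h4)
        (mul_mem_of_mem_Ioc h2 h3) h).1
      linarith
    simp [this]
  have hm0 : 0 < |m| := by linarith
  have hmne : m ≠ 0 := abs_pos.mp hm0
  set B : Set (ℝ × ℝ × ℝ) := Set.Ioc 1 2 ×ˢ (Set.Ioc 1 2 ×ˢ Set.Ioc 1 2) with hB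
  have hBm : MeasurableSet B := measurableSet_Ioc.prod (measurableSet_Ioc.prod measurableSet_Ioc)
  have hBv : volume B = 1 := by
    rw [hB, Measure.volume_eq_prod, Measure.prod_prod, Measure.volume_eq_prod, Measure.prod_prod]
    simp only [Real.volume_Ioc]
    norm_num
  rw [Measure.volume_eq_prod, Measure.prod_apply_symm (measurableSet_slab A δ m k)]
  calc _ ≤ ∫⁻ y, B.indicator (fun _ => ENNReal.ofReal (12 * δ / (A * |k|))) y := by
        refine lintegral_mono fun y => ?_
        by_cases hy : y ∈ B
        · rw [Set.indicator_of_mem hy]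
          obtain ⟨h1, h2, h3⟩ := hy
          have hy3 : 1 < y.2.2 := h3.1
          have hne : y.2.2 * m ≠ 0 := mul_ne_zero (by linarith) hmne
          set c : ℝ := -(A * (y.1 * y.2.1) * k) / (y.2.2 * m) with hc
          -- the slice in `h11` lies in an interval centred at the zero `c` of the linear form
          have hsub : (fun x => (x, y)) ⁻¹' slab A δ m k ⊆ Set.Ioo (c - δ / |m|) (c + δ / |m|) := by
            rintro x ⟨-, hx⟩
            have e : (x * y.2.2) * m + A * (y.1 * y.2.1) * k = (x - c) * (y.2.2 * m) := by
              rw [hc]; field_simp; ring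
            simp only at hx
            rw [e, abs_mul, abs_mul, abs_of_pos (by linarith : 0 < y.2.2)] at hx
            have : |x - c| < δ / |m| := by
              rw [lt_div_iff₀ hm0]
              nlinarith [mul_nonneg (abs_nonneg (x - c)) hm0.le]
            rw [abs_lt] at this
            constructor <;> linarith [this.1, this.2]
          refine (measure_mono hsub).trans ?_
          rw [Real.volume_Ioo]
          apply ENNReal.ofReal_le_ofReal
          have : δ / |m| ≤ δ / (A * |k| / 6) := by gcongr
          have e2 : 12 * δ / (A * |k|) = 2 * (δ / (A * |k| / 6)) := by field_simp; norm_num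
          linarith
        · rw [Set.indicator_of_notMem hy]
          have : (fun x => (x, y)) ⁻¹' slab A δ m k = ∅ := by
            ext x
            simp only [Set.mem_preimage, Set.mem_empty_iff_false, iff_false]
            rintro ⟨⟨-, h1, h2, h3⟩, -⟩
            exact hy ⟨h1, h2, h3⟩
          simp [this]
    _ = _ := by rw [lintegral_indicator_const hBm, hBv, mul_one]

lemma volume_biUnion_le {ι : Type*} (s : Finset ι) (f : ι → Set (ℝ × ℝ × ℝ × ℝ)) {n c : ℝ}
    (hc : 0 ≤ c) (hn : (s.card : ℝ) ≤ n) (h : ∀ i ∈ s, volume (f i) ≤ ENNReal.ofReal c) :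
    volume (⋃ i ∈ s, f i) ≤ ENNReal.ofReal (n * c) := by
  refine (measure_biUnion_finset_le s f).trans ((Finset.sum_le_card_nsmul s _ _ h).trans ?_)
  rw [nsmul_eq_mul, ← ENNReal.ofReal_natCast, ← ENNReal.ofReal_mul (by positivity)]
  exact ENNReal.ofReal_le_ofReal (by gcongr)

/-- The nonzero integers of absolute value at most `N`. -/
noncomputable def nzInts (N : ℕ) : Finset ℤ := (Finset.Icc (-(N : ℤ)) N).erase 0

lemma mem_nzInts {N : ℕ} {k : ℤ} : k ∈ nzInts N ↔ k ≠ 0 ∧ |k| ≤ N := by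
  simp [nzInts, abs_le]

lemma card_nzInts (N : ℕ) : (nzInts N).card = 2 * N := by
  rw [nzInts, Finset.card_erase_of_mem (by simp), Int.card_Icc]
  omega

lemma one_le_abs_cast {k : ℤ} (hk : k ≠ 0) : (1 : ℝ) ≤ |(k : ℝ)| := by
  exact_mod_cast Int.one_le_abs hk

/-- The union bound over the differences `k0`, for fixed `k1` and `k2`; `b` stands for
`A2 * k2`. -/
lemma volume_k0_le {A δ : ℝ} {Q : ℕ} (hQ : 0 < Q) (hA : 3 ≤ A) (hδ0 : 0 < δ) (hδ : δ ≤ 1)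
    {k : ℤ} (hk : k ≠ 0) (b : ℝ) :
    volume (⋃ k0 ∈ Finset.Icc (-(2 * Q : ℤ)) (2 * Q), slab A δ ((k0 : ℝ) + b) k)
      ≤ ENNReal.ofReal (5 * Q * (12 * δ / (A * |(k : ℝ)|))) := by
  refine volume_biUnion_le _ _ (by positivity) ?_
    fun i _ => volume_slab_le hA hδ0 hδ (one_le_abs_cast hk)
  have : (Finset.Icc (-(2 * Q : ℤ)) (2 * Q)).card ≤ 5 * Q := by
    rw [Int.card_Icc]; omega
  exact_mod_cast this

/-- An upper bound for `|k2|` in an outage event with given `k1`, from the comparability of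
`|k0 + A2 * k2|` and `A1 * |k1|`. -/
noncomputable def k2Bound (A1 A2 : ℝ) (k1 : ℤ) : ℕ := ⌊15 * (A1 * |(k1 : ℝ)|) / A2⌋₊

lemma outage_subset {A1 A2 δ : ℝ} {Q0 Q1 : ℕ} (hQ0 : 0 < Q0) (h1 : 3 * (Q0 : ℝ) ≤ A1)
    (h2 : 3 * (Q0 : ℝ) ≤ A2) (hδ : δ ≤ 1) :
    outage3 A1 A2 Q0 Q1 Q1 δ ⊆
      (⋃ k1 ∈ nzInts (2 * Q1), ⋃ k2 ∈ nzInts (k2Bound A1 A2 k1),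
        ⋃ k0 ∈ Finset.Icc (-(2 * Q0 : ℤ)) (2 * Q0), slab A1 δ ((k0 : ℝ) + A2 * k2) k1) ∪
      (⋃ k1 ∈ nzInts 3,
        ⋃ k0 ∈ Finset.Icc (-(2 * Q0 : ℤ)) (2 * Q0), slab A1 δ ((k0 : ℝ) + 0) k1) := by
  rintro ⟨x, y, z, w⟩ ⟨hbox, hd⟩
  have hQ0r : (1 : ℝ) ≤ Q0 := by exact_mod_cast hQ0
  have hne : {d : ℝ | ∃ q0 q1 q2 q0' q1' q2' : ℤ,
      |(q0 : ℝ)| ≤ Q0 ∧ |(q0' : ℝ)| ≤ Q0 ∧ |(q1 : ℝ)| ≤ Q1 ∧ |(q1' : ℝ)| ≤ Q1 ∧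
      |(q2 : ℝ)| ≤ Q1 ∧ |(q2' : ℝ)| ≤ Q1 ∧ (q0, q1, q2) ≠ (q0', q1', q2') ∧
      d = |x * w * ((q0 : ℝ) - (q0' : ℝ)) + A1 * (y * z) * ((q1 : ℝ) - (q1' : ℝ)) +
          A2 * (x * w) * ((q2 : ℝ) - (q2' : ℝ))|}.Nonempty :=
    ⟨_, 1, 0, 0, 0, 0, 0, by simpa using hQ0r, by simp, by simp, by simp, by simp, by simp,
      by simp, rfl⟩
  obtain ⟨d, ⟨q0, q1, q2, q0', q1', q2', b0, b0', b1, b1', b2, b2', hq, rfl⟩, hlt⟩ :=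
    exists_lt_of_csInf_lt hne hd
  obtain ⟨k0, rfl⟩ : ∃ k0, q0 = q0' + k0 := ⟨q0 - q0', by ring⟩
  obtain ⟨k1, rfl⟩ : ∃ k1, q1 = q1' + k1 := ⟨q1 - q1', by ring⟩
  obtain ⟨k2, rfl⟩ : ∃ k2, q2 = q2' + k2 := ⟨q2 - q2', by ring⟩
  have hk : ¬ (k0 = 0 ∧ k1 = 0 ∧ k2 = 0) := by
    rintro ⟨rfl, rfl, rfl⟩
    simp at hq
  have c0 : |(k0 : ℝ)| ≤ 2 * Q0 := by
    push_cast at b0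
    rw [abs_le] at *
    constructor <;> linarith [b0.1, b0.2, b0'.1, b0'.2]
  have c1 : |(k1 : ℝ)| ≤ 2 * Q1 := by
    push_cast at b1
    rw [abs_le] at *
    constructor <;> linarith [b1.1, b1.2, b1'.1, b1'.2]
  have hlt' : |(x * w) * ((k0 : ℝ) + A2 * k2) + A1 * (y * z) * k1| < δ := by
    refine lt_of_eq_of_lt (congrArg abs ?_) hlt
    push_cast
    ring
  have hslab : (x, y, z, w) ∈ slab A1 δ ((k0 : ℝ) + A2 * k2) k1 := ⟨hbox, hlt'⟩
  obtain ⟨hx, hy, hz, hw⟩ := hbox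
  obtain ⟨lo, hi⟩ := comparable (by linarith) hδ (mul_mem_of_mem_Ioc hx hw)
    (mul_mem_of_mem_Ioc hy hz) hlt'
  have tri : A2 * |(k2 : ℝ)| ≤ |(k0 : ℝ) + A2 * k2| + |(k0 : ℝ)| := by
    have := abs_sub ((k0 : ℝ) + A2 * k2) k0
    rw [add_sub_cancel_left, abs_mul, abs_of_nonneg (by linarith : 0 ≤ A2)] at this
    exact this
  have mem0 : k0 ∈ Finset.Icc (-(2 * Q0 : ℤ)) (2 * Q0) := by
    rw [Finset.mem_Icc, ← abs_le]; exact_mod_cast c0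
  have hk1 : k1 ≠ 0 := by
    rintro rfl
    -- with `k1 = 0` the distance is `x * w * |m| ≥ |m| ≥ 1`
    simp only [Int.cast_zero, mul_zero, add_zero, abs_mul (x * w)] at hlt'
    have hxw := mul_mem_of_mem_Ioc hx hw
    have hm : (1 : ℝ) ≤ |(k0 : ℝ) + A2 * k2| := by
      by_cases hk2 : k2 = 0
      · subst hk2
        simpa using one_le_abs_cast (k := k0) (by rintro rfl; simp at hk)
      · have := one_le_abs_cast hk2
        nlinarith
    rw [abs_of_nonneg (by linarith : 0 ≤ x * w)] at hlt'
    nlinarith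
  have hk1' := one_le_abs_cast hk1
  by_cases hk2 : k2 = 0
  · subst hk2
    right
    simp only [Int.cast_zero, mul_zero, add_zero] at lo hslab
    have : |(k1 : ℝ)| ≤ 3 := by
      by_contra! hcon
      nlinarith
    simp only [Set.mem_iUnion]
    refine ⟨k1, mem_nzInts.2 ⟨hk1, by exact_mod_cast this⟩, k0, mem0, by simpa using hslab⟩
  · left
    have hk2' := one_le_abs_cast hk2
    simp only [Set.mem_iUnion]
    refine ⟨k1, mem_nzInts.2 ⟨hk1, by exact_mod_cast c1⟩, k2, mem_nzInts.2 ⟨hk2, ?_⟩, k0, mem0,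
      hslab⟩
    have hnat : k2.natAbs ≤ k2Bound A1 A2 k1 := by
      apply Nat.le_floor
      rw [Nat.cast_natAbs, Int.cast_abs, le_div_iff₀ (by linarith)]
      have e1 : 1 ≤ A1 * |(k1 : ℝ)| := by nlinarith
      have e2 : 3 * (Q0 : ℝ) ≤ A2 * |(k2 : ℝ)| := by nlinarith
      linarith
    rw [Int.abs_eq_natAbs]
    exact_mod_cast hnat

lemma volume_outage_le {A1 A2 δ : ℝ} {Q0 Q1 : ℕ} (hQ0 : 0 < Q0) (h1 : 3 * (Q0 : ℝ) ≤ A1)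
    (h2 : 3 * (Q0 : ℝ) ≤ A2) (hδ0 : 0 < δ) (hδ : δ ≤ 1) :
    volume (outage3 A1 A2 Q0 Q1 Q1 δ) ≤
      ENNReal.ofReal (7200 * δ * (Q0 * Q1 / A2) + 360 * δ * (Q0 / A1)) := by
  have hQ0r : (1 : ℝ) ≤ Q0 := by exact_mod_cast hQ0
  have hA1 : 3 ≤ A1 := by linarith
  have hA1p : 0 < A1 := by linarith
  have hA2p : 0 < A2 := by linarith
  refine (measure_mono (outage_subset hQ0 h1 h2 hδ)).trans ((measure_union_le _ _).trans ?_)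
  rw [ENNReal.ofReal_add (by positivity) (by positivity)]
  refine add_le_add ?_ ?_
  · have key : ∀ k1 ∈ nzInts (2 * Q1), volume (⋃ k2 ∈ nzInts (k2Bound A1 A2 k1),
        ⋃ k0 ∈ Finset.Icc (-(2 * Q0 : ℤ)) (2 * Q0), slab A1 δ ((k0 : ℝ) + A2 * k2) k1) ≤
        ENNReal.ofReal (1800 * δ * Q0 / A2) := by
      intro k1 hk1
      have hk1 := (mem_nzInts.1 hk1).1
      have hk1' := one_le_abs_cast hk1
      have hk1p : 0 < |(k1 : ℝ)| := by linarith
      refine (volume_biUnion_le (n := 2 * (15 * (A1 * |(k1 : ℝ)|) / A2)) _ _ (by positivity) ?_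
        fun k2 _ => volume_k0_le hQ0 hA1 hδ0 hδ hk1 _).trans_eq ?_
      · rw [card_nzInts]
        push_cast
        gcongr
        exact Nat.floor_le (by positivity)
      · congr 1
        field_simp
        norm_num
    refine (volume_biUnion_le (n := 4 * Q1) _ _ (by positivity) ?_ key).trans_eq ?_
    · rw [card_nzInts]; push_cast; linarith
    · congr 1; ring
  · refine (volume_biUnion_le (n := 6) (c := 60 * δ * (Q0 / A1)) _ _ (by positivity) ?_
      fun k1 hk1 => ?_).trans_eq ?_
    · rw [card_nzInts]; norm_num
    · have hk1 := (mem_nzInts.1 hk1).1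
      have hk1' := one_le_abs_cast hk1
      refine (volume_k0_le hQ0 hA1 hδ0 hδ hk1 0).trans (ENNReal.ofReal_le_ofReal ?_)
      have : 12 * δ / (A1 * |(k1 : ℝ)|) ≤ 12 * δ / A1 := by
        gcongr
        nlinarith
      calc 5 * Q0 * (12 * δ / (A1 * |(k1 : ℝ)|)) ≤ 5 * Q0 * (12 * δ / A1) := by gcongr
        _ = 60 * δ * (Q0 / A1) := by ring
    · congr 1; ring

theorem stmt4 (α ε δ P : ℝ)
    (hα : α ∈ Set.Icc (5/6 : ℝ) 1) (hε : 0 < ε) (hδ : δ ∈ Set.Ioc (0 : ℝ) 1) (hP : 1 ≤ P)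
    (Q0 Q1 Q2 A1 A2 : ℕ)
    (hQ0pos : 0 < Q0) (hQ1pos : 0 < Q1) (hQ2pos : 0 < Q2) (hA1pos : 0 < A1) (hA2pos : 0 < A2)
    (hQ0 : (Q0 : ℝ) = P ^ ((1 - α - ε)/2))
    (hQ1 : (Q1 : ℝ) = P ^ ((α - 1/2 - ε)/2))
    (hQ2 : (Q2 : ℝ) = P ^ ((α - 1/2 - ε)/2))
    (hA1 : (A1 : ℝ) = 3 * P ^ ((2*α - 3/2)/2))
    (hA2 : (A2 : ℝ) = 3 * P ^ ((1 : ℝ)/4)) :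
    volume (outage3 (A1 : ℝ) (A2 : ℝ) (Q0 : ℝ) (Q1 : ℝ) (Q2 : ℝ) δ)
        ≤ ENNReal.ofReal (12096 * δ * P ^ (-ε/2)) ∧
    ∀ h11 h12 h21 h22 : ℝ,
      h11 ∈ Set.Ioc (1 : ℝ) 2 → h12 ∈ Set.Ioc (1 : ℝ) 2 →
      h21 ∈ Set.Ioc (1 : ℝ) 2 → h22 ∈ Set.Ioc (1 : ℝ) 2 →
      (h11, h12, h21, h22) ∉ outage3 (A1 : ℝ) (A2 : ℝ) (Q0 : ℝ) (Q1 : ℝ) (Q2 : ℝ) δ →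
      δ ≤ dmin3 (A1 : ℝ) (A2 : ℝ) (Q0 : ℝ) (Q1 : ℝ) (Q2 : ℝ)
            (h11 * h22) (h12 * h21) (h11 * h22) := by
  obtain ⟨hα1, hα2⟩ := hα
  obtain ⟨hδ0, hδ1⟩ := hδ
  have hP0 : 0 < P := by linarith
  refine ⟨?_, fun h11 h12 h21 h22 m11 m12 m21 m22 hout => ?_⟩
  · obtain rfl : Q1 = Q2 := by exact_mod_cast hQ1.trans hQ2.symm
    set R := P ^ (-ε / 2) with hR
    have hR0 : 0 < R := Real.rpow_pos_of_pos hP0 _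
    have hR1 : R ≤ 1 := Real.rpow_le_one_of_one_le_of_nonpos hP (by linarith)
    have hA1R : 3 * (Q0 : ℝ) ≤ A1 * R := by
      rw [hQ0, hA1, hR, mul_assoc, ← Real.rpow_add hP0]
      exact mul_le_mul_of_nonneg_left
        (Real.rpow_le_rpow_of_exponent_le hP (by linarith)) (by norm_num)
    have hA2Q : 3 * (Q0 : ℝ) ≤ A2 := by
      rw [hQ0, hA2]
      exact mul_le_mul_of_nonneg_left
        (Real.rpow_le_rpow_of_exponent_le hP (by linarith)) (by norm_num)
    have hA2R : 3 * ((Q0 : ℝ) * Q1) ≤ A2 * R := by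
      rw [hQ0, hQ1, hA2, hR, mul_assoc, ← Real.rpow_add hP0, ← Real.rpow_add hP0]
      exact mul_le_mul_of_nonneg_left
        (Real.rpow_le_rpow_of_exponent_le hP (by linarith)) (by norm_num)
    have hA1p : (0 : ℝ) < A1 := by exact_mod_cast hA1pos
    have hA2p : (0 : ℝ) < A2 := by exact_mod_cast hA2pos
    have hA1Q : 3 * (Q0 : ℝ) ≤ A1 := by nlinarith
    refine (volume_outage_le hQ0pos hA1Q hA2Q hδ0 hδ1).trans (ENNReal.ofReal_le_ofReal ?_)
    have e1 : (Q0 : ℝ) / A1 ≤ R / 3 := by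
      rw [div_le_iff₀ hA1p]; linarith
    have e2 : (Q0 : ℝ) * Q1 / A2 ≤ R / 3 := by
      rw [div_le_iff₀ hA2p]; linarith
    calc 7200 * δ * ((Q0 : ℝ) * Q1 / A2) + 360 * δ * (Q0 / A1)
        ≤ 7200 * δ * (R / 3) + 360 * δ * (R / 3) := by gcongr
      _ ≤ 12096 * δ * R := by nlinarith [mul_pos hδ0 hR0]
  · by_contra! hlt
    exact hout ⟨⟨m11, m12, m21, m22⟩, hlt⟩
end

section
/- Fix α ∈ [1, 4/3], ε > 0, δ ∈ (0, 1], and P ≥ 1, and set Q′ = P^{(α/2−ε)/2}, A′0 = P^{(2−3α/2)/2}, and A′1 = P^{α/4}; assume Q′, A′0, A′1 are positive integers. For reals g0, g1, let d′_min(g0, g1) be the minimum of |A′0·g0·(q0 − q̃0) + A′1·g1·(q1 − q̃1)| over all pairs of integer pairs (q0, q1) ≠ (q̃0, q̃1) with |q0|, |q̃0|, |q1|, |q̃1| ≤ Q′. Then the set H′₀ := {(h11, h12, h21, h22) ∈ (1, 2]⁴ : d′_min(h11·h22, h12·h21) < δ} has four-dimensional Lebesgue measure at most 192·δ·P^{−ε/2};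 in particular, d′_min(h11·h22, h12·h21) ≥ δ for every (h11, h12, h21, h22) ∈ (1, 2]⁴ outside H′₀. -/
/-!
The event `dmin2 < δ` means that some nonzero difference vector `(a, b)` with `|a|, |b| ≤ 2Q`
satisfies `|A0 g0 a + A1 g1 b| < δ ≤ 1`. Since `A0, A1 ≥ 1` and `g0, g1 > 1`, this forces `a` and
`b` to be nonzero and of opposite signs, so up to a global sign `|A0 g0 a - A1 g1 b| < δ` with
`a, b ≥ 1` (`outage2_subset`). Three facts then give the bound.

* For fixed `(a, b)`, slicing in `h11` shows that the event has measure at most `2δ / (A0 a)`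
  (`volume_pairEvent_le`).
* As `g0 ≤ 4` and `g1 > 1`, the event is empty unless `A1 b < 4 A0 a + 1`, that is
  `A1 b ≤ 4 A0 a` by integrality, so for each `a` at most `4 A0 a / A1` values of `b` matter.
  The factor `a` cancels, and each `a` contributes at most `8δ / A1`: no logarithm appears.
* There are `2Q` values of `a`, and `Q / A1 = P ^ (-ε/2)`.

The resulting constant is `16`, better than the `192` required.
-/

open MeasureTheory

/-- Minimum distance of the constellation `A0·g0·q0 + A1·g1·q1` over pairs of
distinct integer pairs with `|q0|, |q1| ≤ Q`. -/
noncomputable def dmin2 (A0 A1 Q g0 g1 : ℝ) : ℝ :=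
  sInf {d : ℝ | ∃ q0 q1 q0' q1' : ℤ,
    |(q0 : ℝ)| ≤ Q ∧ |(q0' : ℝ)| ≤ Q ∧ |(q1 : ℝ)| ≤ Q ∧ |(q1' : ℝ)| ≤ Q ∧
    (q0, q1) ≠ (q0', q1') ∧
    d = |A0 * g0 * ((q0 : ℝ) - (q0' : ℝ)) + A1 * g1 * ((q1 : ℝ) - (q1' : ℝ))|}

/-- The outage set `H′₀` of channel coefficients `(h11, h12, h21, h22) ∈ (1,2]⁴`
for which the minimum distance `dmin2` at `g0 = h11·h22`, `g1 = h12·h21` is below `δ`. -/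
noncomputable def outage2 (A0 A1 Q δ : ℝ) : Set (ℝ × ℝ × ℝ × ℝ) :=
  {p | (p.1 ∈ Set.Ioc (1 : ℝ) 2 ∧ p.2.1 ∈ Set.Ioc (1 : ℝ) 2 ∧
        p.2.2.1 ∈ Set.Ioc (1 : ℝ) 2 ∧ p.2.2.2 ∈ Set.Ioc (1 : ℝ) 2) ∧
       dmin2 A0 A1 Q (p.1 * p.2.2.2) (p.2.1 * p.2.2.1) < δ}

/-- The channel coefficients in `(1,2]⁴` for which the opposite-sign difference vector `(a, -b)`
yields a distance below `δ`. -/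
def pairEvent (A0 A1 δ : ℝ) (a b : ℕ) : Set (ℝ × ℝ × ℝ × ℝ) :=
  {p | (p.1 ∈ Set.Ioc (1 : ℝ) 2 ∧ p.2.1 ∈ Set.Ioc (1 : ℝ) 2 ∧
        p.2.2.1 ∈ Set.Ioc (1 : ℝ) 2 ∧ p.2.2.2 ∈ Set.Ioc (1 : ℝ) 2) ∧
       |A0 * (p.1 * p.2.2.2) * a - A1 * (p.2.1 * p.2.2.1) * b| < δ}

lemma measurableSet_pairEvent (A0 A1 δ : ℝ) (a b : ℕ) :
    MeasurableSet (pairEvent A0 A1 δ a b) := by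
  unfold pairEvent
  apply MeasurableSet.inter
  · have h : MeasurableSet (Set.Ioc (1 : ℝ) 2) := measurableSet_Ioc
    exact (h.preimage measurable_fst).inter
      ((h.preimage (by fun_prop : Measurable fun p : ℝ × ℝ × ℝ × ℝ => p.2.1)).inter
      ((h.preimage (by fun_prop : Measurable fun p : ℝ × ℝ × ℝ × ℝ => p.2.2.1)).inter
      (h.preimage (by fun_prop : Measurable fun p : ℝ × ℝ × ℝ × ℝ => p.2.2.2))))
  · exact measurableSet_lt (f := fun p : ℝ × ℝ × ℝ × ℝ =>
      |A0 * (p.1 * p.2.2.2) * a - A1 * (p.2.1 * p.2.2.1) * b|)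
      (Continuous.measurable (by fun_prop)) measurable_const

/-- For fixed `h12, h21, h22` the admissible `h11` lie in an interval of length
`2δ / (A0 a h22) ≤ 2δ / (A0 a)`. -/
lemma volume_pairEvent_le (A0 A1 δ : ℝ) (hA0 : 0 < A0) (hδ : 0 < δ) (a b : ℕ) (ha : 1 ≤ a) :
    volume (pairEvent A0 A1 δ a b) ≤ ENNReal.ofReal (2 * δ / (A0 * a)) := by
  have ha' : (0 : ℝ) < a := by exact_mod_cast ha
  rw [Measure.volume_eq_prod, Measure.prod_apply_symm (measurableSet_pairEvent A0 A1 δ a b)]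
  set B : Set (ℝ × ℝ × ℝ) := Set.Ioc (1 : ℝ) 2 ×ˢ Set.Ioc (1 : ℝ) 2 ×ˢ Set.Ioc (1 : ℝ) 2 with hB
  have hBm : MeasurableSet B :=
    measurableSet_Ioc.prod (measurableSet_Ioc.prod measurableSet_Ioc)
  have hBv : volume B = 1 := by
    rw [hB, Measure.volume_eq_prod, Measure.prod_prod, Measure.volume_eq_prod, Measure.prod_prod]
    norm_num [Real.volume_Ioc]
  calc ∫⁻ y, volume ((fun x => (x, y)) ⁻¹' pairEvent A0 A1 δ a b)
      ≤ ∫⁻ y, B.indicator (fun _ => ENNReal.ofReal (2 * δ / (A0 * a))) y := by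
        apply lintegral_mono
        intro y
        by_cases hy : y ∈ B
        · simp only [Set.indicator_of_mem hy]
          obtain ⟨-, -, hy4, -⟩ := hy
          set k : ℝ := A0 * a * y.2.2 with hk
          set c : ℝ := A1 * (y.1 * y.2.1) * b with hc
          have hk1 : A0 * a ≤ k := le_mul_of_one_le_right (by positivity) hy4.le
          have hA0a : 0 < A0 * a := by positivity
          have hk0 : 0 < k := hA0a.trans_le hk1
          refine (measure_mono (t := Set.Ioo ((c - δ) / k) ((c + δ) / k)) ?_).trans ?_
          · rintro x ⟨-, hx⟩
            have hx' : |x * k - c| < δ := by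
              convert hx using 2
              simp only [hk, hc]; ring
            rw [abs_lt] at hx'
            constructor
            · rw [div_lt_iff₀ hk0]; linarith
            · rw [lt_div_iff₀ hk0]; linarith
          · rw [Real.volume_Ioo]
            apply ENNReal.ofReal_le_ofReal
            rw [← sub_div, show c + δ - (c - δ) = 2 * δ by ring]
            exact div_le_div_of_nonneg_left (by positivity) hA0a hk1
        · simp only [Set.indicator_of_notMem hy, nonpos_iff_eq_zero]
          convert measure_empty (μ := (volume : Measure ℝ))
          ext x
          simp only [Set.mem_preimage, Set.mem_empty_iff_false, iff_false]
          rintro ⟨⟨-, h2, h3, h4⟩, -⟩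
          exact hy ⟨h2, h3, h4⟩
    _ = ENNReal.ofReal (2 * δ / (A0 * a)) := by
        rw [lintegral_indicator hBm, setLIntegral_const, hBv, mul_one]

/-- Covering of the outage set; natural-number division rounds down, which encodes
`A1 * b ≤ 4 * A0 * a`. -/
lemma outage2_subset (A0 A1 Q : ℕ) (δ : ℝ) (hA0 : 0 < A0) (hA1 : 0 < A1) (hQ : 0 < Q)
    (hδ : δ ≤ 1) :
    outage2 A0 A1 Q δ ⊆ ⋃ a ∈ Finset.Icc 1 (2 * Q), ⋃ b ∈ Finset.Icc 1 (4 * A0 * a / A1),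
      pairEvent A0 A1 δ a b := by
  rintro ⟨x, y, z, w⟩ ⟨⟨hx, hy, hz, hw⟩, hd⟩
  simp only at hx hy hz hw hd
  -- Nonemptiness is needed because `sInf ∅ = 0` carries no information.
  have hne : {d : ℝ | ∃ q0 q1 q0' q1' : ℤ,
      |(q0 : ℝ)| ≤ Q ∧ |(q0' : ℝ)| ≤ Q ∧ |(q1 : ℝ)| ≤ Q ∧ |(q1' : ℝ)| ≤ Q ∧
      (q0, q1) ≠ (q0', q1') ∧
      d = |A0 * (x * w) * ((q0 : ℝ) - (q0' : ℝ)) + A1 * (y * z) * ((q1 : ℝ) - (q1' : ℝ))|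
      }.Nonempty := by
    refine ⟨_, 1, 0, 0, 0, ?_, ?_, ?_, ?_, ?_, rfl⟩ <;> simp
    exact hQ
  obtain ⟨d, ⟨q0, q1, r0, r1, h1, h2, h3, h4, hneq, rfl⟩, hlt⟩ := exists_lt_of_csInf_lt hne hd
  have hA0' : (1 : ℝ) ≤ A0 := by exact_mod_cast hA0
  have hA1' : (1 : ℝ) ≤ A1 := by exact_mod_cast hA1
  have hg0 : 1 < x * w := by nlinarith [hx.1, hw.1]
  have hg1 : 1 < y * z := by nlinarith [hy.1, hz.1]
  have hg0' : x * w ≤ 4 := by nlinarith [hx.1, hw.1, hx.2, hw.2]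
  have hu : 1 < A0 * (x * w) := by nlinarith
  have hv : 1 < A1 * (y * z) := by nlinarith
  have hvA : (A1 : ℝ) ≤ A1 * (y * z) := by nlinarith
  have huA : A0 * (x * w) ≤ 4 * A0 := by nlinarith
  -- The positive-difference form shared by both sign patterns.
  have key : ∀ a b : ℤ, 1 ≤ a → 1 ≤ b → a ≤ 2 * Q →
      |A0 * (x * w) * (a : ℝ) - A1 * (y * z) * (b : ℝ)| < δ →
      (x, y, z, w) ∈ ⋃ a ∈ Finset.Icc 1 (2 * Q), ⋃ b ∈ Finset.Icc 1 (4 * A0 * a / A1),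
        pairEvent A0 A1 δ a b := by
    intro a b ha hb haQ hab
    lift a to ℕ using by omega
    lift b to ℕ using by omega
    simp only [Int.cast_natCast] at hab
    have hA1b : A1 * b ≤ 4 * A0 * a := by
      have h := (abs_lt.mp hab).1
      have : (A1 * b : ℝ) < 4 * A0 * a + 1 := by
        have e1 : (A1 * b : ℝ) ≤ A1 * (y * z) * b := by gcongr
        have e2 : A0 * (x * w) * (a : ℝ) ≤ 4 * A0 * a := by gcongr
        linarith
      have h' : A1 * b < 4 * A0 * a + 1 := by exact_mod_cast this
      omega
    simp only [Set.mem_iUnion, Finset.mem_Icc]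
    refine ⟨a, ⟨by omega, by omega⟩, b, ⟨by omega, ?_⟩, ⟨hx, hy, hz, hw⟩, hab⟩
    rw [Nat.le_div_iff_mul_le hA1]
    linarith
  have hq : ∀ q : ℤ, |(q : ℝ)| ≤ Q → -(Q : ℤ) ≤ q ∧ q ≤ Q := by
    intro q h
    rw [abs_le] at h
    exact ⟨by exact_mod_cast h.1, by exact_mod_cast h.2⟩
  have b1 := hq _ h1
  have b2 := hq _ h2
  have hlt' := abs_lt.mp hlt
  obtain ⟨s, hs⟩ : ∃ s, s = q0 - r0 := ⟨_, rfl⟩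
  obtain ⟨t, ht⟩ : ∃ t, t = q1 - r1 := ⟨_, rfl⟩
  have hsR : (q0 : ℝ) - r0 = s := by rw [hs]; push_cast; ring
  have htR : (q1 : ℝ) - r1 = t := by rw [ht]; push_cast; ring
  rw [hsR, htR] at hlt hlt'
  have hst : s ≠ 0 ∨ t ≠ 0 := by
    by_contra! h
    exact hneq (Prod.ext (by simp; omega) (by simp; omega))
  -- A sum of two terms of the same sign, one of them with a nonzero integer factor, exceeds `1`.
  have same : ∀ m n : ℤ, 0 ≤ m → 0 ≤ n → 1 ≤ m + n →
      (1 : ℝ) < A0 * (x * w) * m + A1 * (y * z) * n := by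
    intro m n hm hn hmn
    have hm' : (0 : ℝ) ≤ m := by exact_mod_cast hm
    have hn' : (0 : ℝ) ≤ n := by exact_mod_cast hn
    have hmn' : (1 : ℝ) ≤ m + n := by exact_mod_cast hmn
    rcases hm.eq_or_lt with h | h
    · subst h
      simp at hmn' ⊢
      nlinarith
    · have : (1 : ℝ) ≤ m := by exact_mod_cast h
      nlinarith
  have hpos : ¬ (0 ≤ s ∧ 0 ≤ t) := fun ⟨h, h'⟩ => by
    have := same s t h h' (by omega)
    linarith
  have hneg : ¬ (s ≤ 0 ∧ t ≤ 0) := fun ⟨h, h'⟩ => by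
    have := same (-s) (-t) (by omega) (by omega) (by omega)
    push_cast at this
    linarith
  rcases lt_trichotomy s 0 with h | h | h
  · refine key (-s) t (by omega) (by omega) (by omega) ?_
    rw [abs_lt]
    push_cast
    constructor <;> linarith
  · omega
  · refine key s (-t) (by omega) (by omega) (by omega) ?_
    rw [abs_lt]
    push_cast
    constructor <;> linarith

theorem stmt5 (α ε δ P : ℝ)
    (hα : α ∈ Set.Icc (1 : ℝ) (4/3)) (hε : 0 < ε) (hδ : δ ∈ Set.Ioc (0 : ℝ) 1) (hP : 1 ≤ P)
    (Q A0 A1 : ℕ) (hQpos : 0 < Q) (hA0pos : 0 < A0) (hA1pos : 0 < A1)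
    (hQ : (Q : ℝ) = P ^ ((α/2 - ε)/2))
    (hA0 : (A0 : ℝ) = P ^ ((2 - 3*α/2)/2))
    (hA1 : (A1 : ℝ) = P ^ (α/4)) :
    volume (outage2 (A0 : ℝ) (A1 : ℝ) (Q : ℝ) δ) ≤ ENNReal.ofReal (192 * δ * P ^ (-ε/2)) ∧
    ∀ h11 h12 h21 h22 : ℝ,
      h11 ∈ Set.Ioc (1 : ℝ) 2 → h12 ∈ Set.Ioc (1 : ℝ) 2 →
      h21 ∈ Set.Ioc (1 : ℝ) 2 → h22 ∈ Set.Ioc (1 : ℝ) 2 →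
      (h11, h12, h21, h22) ∉ outage2 (A0 : ℝ) (A1 : ℝ) (Q : ℝ) δ →
      δ ≤ dmin2 (A0 : ℝ) (A1 : ℝ) (Q : ℝ) (h11 * h22) (h12 * h21) := by
  have hA0R : (0 : ℝ) < A0 := by exact_mod_cast hA0pos
  have hA1R : (0 : ℝ) < A1 := by exact_mod_cast hA1pos
  have hδ0 : 0 < δ := hδ.1
  refine ⟨?_, ?_⟩
  · have hQA : (Q : ℝ) / A1 = P ^ (-ε/2) := by
      rw [hQ, hA1, ← Real.rpow_sub (by linarith)]
      congr 1; ring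
    have hrow : ∀ a ∈ Finset.Icc 1 (2 * Q),
        volume (⋃ b ∈ Finset.Icc 1 (4 * A0 * a / A1), pairEvent A0 A1 δ a b)
          ≤ ENNReal.ofReal (8 * δ / A1) := by
      intro a ha
      have ha1 : 1 ≤ a := (Finset.mem_Icc.mp ha).1
      have haR : (0 : ℝ) < a := by exact_mod_cast ha1
      calc volume (⋃ b ∈ Finset.Icc 1 (4 * A0 * a / A1), pairEvent A0 A1 δ a b)
          ≤ ∑ b ∈ Finset.Icc 1 (4 * A0 * a / A1), volume (pairEvent A0 A1 δ a b) :=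
            measure_biUnion_finset_le _ _
        _ ≤ ∑ b ∈ Finset.Icc 1 (4 * A0 * a / A1), ENNReal.ofReal (2 * δ / (A0 * a)) :=
            Finset.sum_le_sum fun b _ => volume_pairEvent_le _ _ _ hA0R hδ0 a b ha1
        _ = ENNReal.ofReal ((4 * A0 * a / A1 : ℕ) * (2 * δ / (A0 * a))) := by
            rw [Finset.sum_const, Nat.card_Icc, Nat.add_sub_cancel, nsmul_eq_mul,
              ENNReal.ofReal_mul (by positivity), ENNReal.ofReal_natCast]
        _ ≤ ENNReal.ofReal (8 * δ / A1) := by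
            apply ENNReal.ofReal_le_ofReal
            have h : ((4 * A0 * a / A1 : ℕ) : ℝ) ≤ 4 * A0 * a / A1 := by
              exact_mod_cast (Nat.cast_div_le (α := ℝ) (m := 4 * A0 * a) (n := A1))
            calc ((4 * A0 * a / A1 : ℕ) : ℝ) * (2 * δ / (A0 * a))
                ≤ 4 * A0 * a / A1 * (2 * δ / (A0 * a)) := by gcongr
              _ = 8 * δ / A1 := by field_simp; norm_num
    calc volume (outage2 (A0 : ℝ) (A1 : ℝ) (Q : ℝ) δ)
        ≤ ∑ a ∈ Finset.Icc 1 (2 * Q),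
            volume (⋃ b ∈ Finset.Icc 1 (4 * A0 * a / A1), pairEvent A0 A1 δ a b) :=
          (measure_mono (outage2_subset A0 A1 Q δ hA0pos hA1pos hQpos hδ.2)).trans
            (measure_biUnion_finset_le _ _)
      _ ≤ ∑ a ∈ Finset.Icc 1 (2 * Q), ENNReal.ofReal (8 * δ / A1) := Finset.sum_le_sum hrow
      _ = ENNReal.ofReal ((2 * Q : ℕ) * (8 * δ / A1)) := by
          rw [Finset.sum_const, Nat.card_Icc, Nat.add_sub_cancel, nsmul_eq_mul,
            ENNReal.ofReal_mul (by positivity), ENNReal.ofReal_natCast]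
      _ ≤ ENNReal.ofReal (192 * δ * P ^ (-ε/2)) := by
          apply ENNReal.ofReal_le_ofReal
          rw [← hQA]
          have h : 0 ≤ δ * ((Q : ℝ) / A1) := by positivity
          have e : ((2 * Q : ℕ) : ℝ) * (8 * δ / A1) = 16 * (δ * ((Q : ℝ) / A1)) := by
            push_cast; ring
          rw [e]
          linarith
  · intro h11 h12 h21 h22 a b c d hnot
    by_contra! h
    exact hnot ⟨⟨a, b, c, d⟩, h⟩
end

section
/- Let h, σ, e_max, γ′, α1, α2 be positive constants and let α′ satisfy 0 < α′ < α1 − α2. For each P ≥ 1, set Q_P = P^{α′/2}·h·γ′/(2·e_max) and ξ_P = γ′/Q_P, and for each P for which Q_P is a positive integer, let x_P be a random variable uniformly distributed on Ω(ξ_P, Q_P), let e_P be any random variable with |e_P| ≤ e_max almost surely, and let z ~ N(0, σ²) be independent of (x_P, e_P); set y′_P = P^{α1/2}·h·x_P + P^{α2/2}·e_P + z. Then there exist measurable estimators f_P : ℝ → Ω(ξ_P, Q_P) such that Pr[f_P(y′_P) ≠ x_P] → 0 as P → ∞ along the values of P for which Q_P is a positive integer. -/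
/-!
Minimum-distance decoding. At the receiver the constellation points `P^(α1/2)·h·ξ·a` are spaced by
`d = P^(α1/2)·h·γ'/Q = 2·emax·P^((α1-α')/2)`, while the interference is at most `emax·P^(α2/2)`.
Rounding `y/d` to the nearest integer, clamped to `[-Q, Q]`, therefore recovers the symbol as soon as
`|z| < T`, provided `emax·P^(α2/2) + T ≤ d/2` (`pamDecode_eq`). Writing `δ = (α1-α2-α')/2 > 0`, this
amounts to `P^(α2/2)·(P^δ - 1) ≥ T/emax`, which holds for all large `P`. By Chebyshev's inequality
`T = σ/√ε` makes `|z| ≥ T` an event of probability at most `ε` (`gaussian_tail_le`).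
-/

open MeasureTheory ProbabilityTheory
open scoped ENNReal

/-- The PAM constellation `Ω(ξ, Q) = {ξ·a : a ∈ ℤ, |a| ≤ Q}`. -/
def PAMset (ξ : ℝ) (Q : ℕ) : Set ℝ := {x | ∃ a : ℤ, |a| ≤ (Q : ℤ) ∧ x = ξ * (a : ℝ)}

/-- `V` is uniformly distributed on the PAM constellation `Ω(ξ, Q)`:
each of the `2Q+1` points has probability `1/(2Q+1)`. -/
def IsUniformPAM {Ω : Type*} [MeasureSpace Ω] (V : Ω → ℝ) (ξ : ℝ) (Q : ℕ) : Prop :=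
  ∀ a : ℤ, |a| ≤ (Q : ℤ) →
    volume {ω | V ω = ξ * (a : ℝ)} = 1 / (2 * (Q : ℝ≥0∞) + 1)

/-- Minimum-distance decoder for the constellation `Ω(ξ, Q)` received with spacing `d`: round `y/d`
to the nearest integer, clamp it to `[-Q, Q]`, and scale by `ξ`. -/
noncomputable def pamDecode (d ξ : ℝ) (Q : ℕ) (y : ℝ) : ℝ :=
  ξ * ((max (-(Q : ℤ)) (min (Q : ℤ) ⌊y / d + 1 / 2⌋) : ℤ) : ℝ)

lemma measurable_pamDecode (d ξ : ℝ) (Q : ℕ) : Measurable (pamDecode d ξ Q) := by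
  have h1 : Measurable fun y : ℝ => ⌊y / d + 1 / 2⌋ :=
    Measurable.floor (by fun_prop)
  have h2 : Measurable fun n : ℤ => ξ * ((max (-(Q : ℤ)) (min (Q : ℤ) n) : ℤ) : ℝ) :=
    measurable_from_top
  exact h2.comp h1

lemma pamDecode_mem (d ξ : ℝ) (Q : ℕ) (y : ℝ) : pamDecode d ξ Q y ∈ PAMset ξ Q :=
  ⟨_, abs_le.2 ⟨le_max_left _ _, max_le (by omega) (min_le_left _ _)⟩, rfl⟩

lemma pamDecode_eq {d ξ : ℝ} {Q : ℕ} {a : ℤ} {w : ℝ} (hd : 0 < d) (ha : |a| ≤ (Q : ℤ))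
    (hw : |w| < d / 2) : pamDecode d ξ Q (d * a + w) = ξ * a := by
  obtain ⟨hw1, hw2⟩ := abs_lt.1 hw
  obtain ⟨ha1, ha2⟩ := abs_le.1 ha
  have hfl : ⌊(d * a + w) / d + 1 / 2⌋ = a := by
    have e : (d * a + w) / d = a + w / d := by field_simp
    have h1 : -(1 / 2) < w / d := by rw [lt_div_iff₀ hd]; linarith
    have h2 : w / d < 1 / 2 := by rw [div_lt_iff₀ hd]; linarith
    rw [Int.floor_eq_iff, e]
    constructor <;> linarith
  rw [pamDecode, hfl, min_eq_right ha2, max_eq_right ha1]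

/-- Each point of the constellation has mass `1/(2Q+1)` and there are `2Q+1` of them, so they carry
all the mass. -/
lemma IsUniformPAM.ae_mem {Ω : Type*} [MeasureSpace Ω] [IsProbabilityMeasure (volume : Measure Ω)]
    {V : Ω → ℝ} {ξ : ℝ} {Q : ℕ} (hV : Measurable V) (hξ : 0 < ξ) (hU : IsUniformPAM V ξ Q) :
    ∀ᵐ ω, V ω ∈ PAMset ξ Q := by
  have hset : {ω | V ω ∈ PAMset ξ Q} =
      ⋃ a ∈ Finset.Icc (-(Q : ℤ)) Q, {ω | V ω = ξ * (a : ℝ)} := by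
    ext ω
    simp [PAMset, abs_le]
  have hms : ∀ a ∈ Finset.Icc (-(Q : ℤ)) Q, MeasurableSet {ω | V ω = ξ * (a : ℝ)} :=
    fun a _ => hV (measurableSet_singleton _)
  have hmeas : MeasurableSet {ω | V ω ∈ PAMset ξ Q} := by
    rw [hset]
    exact Finset.measurableSet_biUnion _ hms
  have hone : volume {ω | V ω ∈ PAMset ξ Q} = 1 := by
    rw [hset, measure_biUnion_finset _ hms]
    · rw [Finset.sum_congr rfl fun a ha => hU a (abs_le.2 (Finset.mem_Icc.1 ha))]
      have hc : (Finset.Icc (-(Q : ℤ)) Q).card = 2 * Q + 1 := by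
        rw [Int.card_Icc]; omega
      rw [Finset.sum_const, hc, nsmul_eq_mul]
      push_cast
      exact ENNReal.mul_div_cancel (by simp) (by finiteness)
    · intro a _ b _ hab
      refine Set.disjoint_left.2 fun ω h1 h2 => hab ?_
      have h3 : ξ * (a : ℝ) = ξ * b := h1.symm.trans h2
      exact_mod_cast mul_left_cancel₀ hξ.ne' h3
  exact (prob_compl_eq_zero_iff hmeas).2 hone

lemma gaussian_tail_le {σ ε : ℝ} (hσ : 0 < σ) (hε : 0 < ε) :
    gaussianReal 0 (Real.toNNReal (σ ^ 2)) {t | σ / √ε ≤ |t|} ≤ ENNReal.ofReal ε := by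
  have hT : 0 < σ / √ε := by positivity
  have hc := meas_ge_le_variance_div_sq
    (memLp_id_gaussianReal' (μ := 0) (v := Real.toNNReal (σ ^ 2)) 2 (by simp)) hT
  rw [variance_id_gaussianReal] at hc
  have hv : ((Real.toNNReal (σ ^ 2) : NNReal) : ℝ) / (σ / √ε) ^ 2 = ε := by
    rw [Real.coe_toNNReal _ (by positivity), div_pow, Real.sq_sqrt hε.le]
    field_simp
  rw [hv] at hc
  simpa using hc

theorem stmt11 (h σ emax γ' α1 α2 α' : ℝ)
    (hh : 0 < h) (hσ : 0 < σ) (hemax : 0 < emax) (hγ' : 0 < γ')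
    (hα1 : 0 < α1) (hα2 : 0 < α2) (hα' : 0 < α') (hα'lt : α' < α1 - α2) :
    ∃ f : ℝ → ℝ → ℝ,
      (∀ P : ℝ, Measurable (f P)) ∧
      ∀ ε : ℝ, 0 < ε → ∃ P0 : ℝ, ∀ P : ℝ, P0 ≤ P → 1 ≤ P →
        ∀ Q : ℕ, 0 < Q → (Q : ℝ) = P ^ (α'/2) * h * γ' / (2 * emax) →
          (∀ y : ℝ, f P y ∈ PAMset (γ' / (Q : ℝ)) Q) ∧
          ∀ (Ω : Type) [MeasureSpace Ω] [IsProbabilityMeasure (volume : Measure Ω)]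
            (x e z : Ω → ℝ), Measurable x → Measurable e → Measurable z →
            IsUniformPAM x (γ' / (Q : ℝ)) Q →
            (∀ᵐ ω ∂volume, |e ω| ≤ emax) →
            Measure.map z volume = gaussianReal 0 (Real.toNNReal (σ ^ 2)) →
            IndepFun (fun ω => (x ω, e ω)) z volume →
            volume {ω | f P (P ^ (α1/2) * h * x ω + P ^ (α2/2) * e ω + z ω) ≠ x ω}
              ≤ ENNReal.ofReal ε := by
  refine ⟨fun P => pamDecode (P ^ (α1/2) * h * (γ' / (P ^ (α'/2) * h * γ' / (2 * emax))))
    (γ' / (P ^ (α'/2) * h * γ' / (2 * emax))) ⌊P ^ (α'/2) * h * γ' / (2 * emax)⌋₊,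
    fun P => measurable_pamDecode _ _ _, fun ε hε => ?_⟩
  set T := σ / √ε with hTdef
  have hT : 0 < T := by positivity
  set δ := (α1 - α2 - α') / 2 with hδdef
  have hδ : 0 < δ := by rw [hδdef]; linarith
  obtain ⟨P0, hP0⟩ := Filter.eventually_atTop.1
    ((tendsto_rpow_atTop hδ).eventually_ge_atTop (1 + T / emax))
  refine ⟨P0, fun P hP hP1 Q hQ hQeq => ?_⟩
  have hD := hP0 P hP
  have hPpos : 0 < P := by linarith
  have hQpos : (0 : ℝ) < Q := by exact_mod_cast hQ
  beta_reduce
  rw [← hQeq, Nat.floor_natCast]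
  refine ⟨fun y => pamDecode_mem _ _ _ _, ?_⟩
  intro Ω _ _ x e z hx he hz hU heb hzlaw _
  have hξ : 0 < γ' / (Q : ℝ) := by positivity
  set d := P ^ (α1/2) * h * (γ' / (Q : ℝ)) with hd
  have hdpos : 0 < d := by positivity
  have hB : 1 ≤ P ^ (α2/2) := Real.one_le_rpow hP1 (by positivity)
  have hhalf : P ^ (α2/2) * emax + T ≤ d / 2 := by
    have hsplit : P ^ (α1/2) = P ^ (α'/2) * P ^ (α2/2) * P ^ δ := by
      rw [← Real.rpow_add hPpos, ← Real.rpow_add hPpos]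
      congr 1
      rw [hδdef]; ring
    have hA : 0 < P ^ (α'/2) := by positivity
    have hd2 : d / 2 = emax * (P ^ (α2/2) * P ^ δ) := by
      rw [hd, hQeq, hsplit]
      field_simp
    have h1 : emax + T ≤ emax * P ^ δ := by
      calc emax + T = emax * (1 + T / emax) := by field_simp
        _ ≤ _ := by gcongr
    have h2 : P ^ (α2/2) * (emax + T) ≤ P ^ (α2/2) * (emax * P ^ δ) := by gcongr
    rw [hd2]
    nlinarith
  have hzT : volume {ω | T ≤ |z ω|} ≤ ENNReal.ofReal ε := by
    have hm : MeasurableSet {t : ℝ | T ≤ |t|} := measurableSet_le measurable_const (by fun_prop)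
    have := gaussian_tail_le hσ hε
    rwa [← hzlaw, Measure.map_apply hz hm] at this
  refine (measure_mono_ae ?_).trans hzT
  filter_upwards [hU.ae_mem hx hξ, heb] with ω ⟨a, ha, hxa⟩ heω hne
  by_contra hlt
  refine hne ?_
  have hlt' : |z ω| < T := not_le.1 hlt
  have hw : |P ^ (α2/2) * e ω + z ω| < d / 2 := by
    have h1 : |P ^ (α2/2) * e ω| ≤ P ^ (α2/2) * emax := by
      rw [abs_mul, abs_of_nonneg (by positivity)]
      gcongr
    have h2 := abs_add_le (P ^ (α2/2) * e ω) (z ω)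
    linarith
  have hy : P ^ (α1/2) * h * x ω + P ^ (α2/2) * e ω + z ω =
      d * a + (P ^ (α2/2) * e ω + z ω) := by
    rw [hxa, hd]; ring
  rw [hy, pamDecode_eq hdpos ha hw, hxa]
end
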